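/- Soundness of case 1 of Inverse_L: If G is the identity formula λv.v of type A → A and H is a typed ASP λ-calculus formula of type A in β-normal form, then F = λv.(v@H) (of type (A → A) → A, suitably typed) satisfies F @ G = H after β-reduction. -/

import Mathlib

/- Typed Answer Set Programming lambda calculus (Baral, Dzifcak, Gonzalez, Gottesman).

   Base types: e (terms), a (atoms), l (literals), g (gen-literals),
   d (bodies), h (heads), t (satisfiability values).  Terms are de Bruijn
   lambda terms over ASP connectives; function and predicate symbols are
   constants of iterated arrow type applied via `app`. -/

namespace ASPLambda

inductive BTy : Type
  | e | a | l | g | d | h | t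
deriving DecidableEq, Repr

inductive Ty : Type
  | base : BTy → Ty
  | arrow : Ty → Ty → Ty
deriving DecidableEq, Repr

/-- The order of a type: base types have order 0,
    `order (A → B) = max (order A + 1) (order B)`. -/
def Ty.order : Ty → ℕ
  | .base _ => 0
  | .arrow A B => max (A.order + 1) B.order

/-- Iterated arrow type `A → ⋯ → A → B` with `n` arguments. -/
def Ty.arrN : ℕ → Ty → Ty → Ty
  | 0, _, B => B
  | n + 1, A, B => .arrow A (Ty.arrN n A B)

/-- ASP typed terms (de Bruijn representation).  `neg` is classical negation ¬,
    `naf` is negation as failure (not), `disj` is `or`, `conj` is `,`,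
    `rule h b` is `h ← b.`, `ruleH h` is `h ←.`, `ruleB b` is `← b.`,
    and `seq` juxtaposes rules/programs. -/
inductive Tm : Type
  | var : ℕ → Tm
  | const : String → Ty → Tm
  | app : Tm → Tm → Tm
  | lam : Ty → Tm → Tm
  | neg : Tm → Tm
  | naf : Tm → Tm
  | disj : Tm → Tm → Tm
  | conj : Tm → Tm → Tm
  | rule : Tm → Tm → Tm
  | ruleH : Tm → Tm
  | ruleB : Tm → Tm
  | seq : Tm → Tm → Tm
deriving DecidableEq, Repr

namespace Tm

/-- de Bruijn shift by `dpl` of indices ≥ `c`. -/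
def shift (dpl c : ℕ) : Tm → Tm
  | .var n => if n < c then .var n else .var (n + dpl)
  | .const s A => .const s A
  | .app f x => .app (f.shift dpl c) (x.shift dpl c)
  | .lam A b => .lam A (b.shift dpl (c + 1))
  | .neg x => .neg (x.shift dpl c)
  | .naf x => .naf (x.shift dpl c)
  | .disj x y => .disj (x.shift dpl c) (y.shift dpl c)
  | .conj x y => .conj (x.shift dpl c) (y.shift dpl c)
  | .rule x y => .rule (x.shift dpl c) (y.shift dpl c)
  | .ruleH x => .ruleH (x.shift dpl c)
  | .ruleB x => .ruleB (x.shift dpl c)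
  | .seq x y => .seq (x.shift dpl c) (y.shift dpl c)

/-- Substitution of `s` for de Bruijn index `j` (decrementing higher indices). -/
def subst : ℕ → Tm → Tm → Tm
  | j, s, .var n => if n = j then s else if j < n then .var (n - 1) else .var n
  | _, _, .const c A => .const c A
  | j, s, .app f x => .app (subst j s f) (subst j s x)
  | j, s, .lam A b => .lam A (subst (j + 1) (s.shift 1 0) b)
  | j, s, .neg x => .neg (subst j s x)
  | j, s, .naf x => .naf (subst j s x)
  | j, s, .disj x y => .disj (subst j s x) (subst j s y)
  | j, s, .conj x y => .conj (subst j s x) (subst j s y)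
  | j, s, .rule x y => .rule (subst j s x) (subst j s y)
  | j, s, .ruleH x => .ruleH (subst j s x)
  | j, s, .ruleB x => .ruleB (subst j s x)
  | j, s, .seq x y => .seq (subst j s x) (subst j s y)

/-- Whether the de Bruijn index `k` occurs free. -/
def hasFree (k : ℕ) : Tm → Bool
  | .var n => n == k
  | .const _ _ => false
  | .app f x => f.hasFree k || x.hasFree k
  | .lam _ b => b.hasFree (k + 1)
  | .neg x => x.hasFree k
  | .naf x => x.hasFree k
  | .disj x y => x.hasFree k || y.hasFree k
  | .conj x y => x.hasFree k || y.hasFree k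
  | .rule x y => x.hasFree k || y.hasFree k
  | .ruleH x => x.hasFree k
  | .ruleB x => x.hasFree k
  | .seq x y => x.hasFree k || y.hasFree k

/-- Every abstractor binds (at least one occurrence of) its variable (λI condition). -/
def lamI : Tm → Bool
  | .var _ => true
  | .const _ _ => true
  | .app f x => f.lamI && x.lamI
  | .lam _ b => b.lamI && b.hasFree 0
  | .neg x => x.lamI
  | .naf x => x.lamI
  | .disj x y => x.lamI && y.lamI
  | .conj x y => x.lamI && y.lamI
  | .rule x y => x.lamI && y.lamI
  | .ruleH x => x.lamI
  | .ruleB x => x.lamI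
  | .seq x y => x.lamI && y.lamI

/-- A λ-term in the sense of the signature: a variable or a constant. -/
def isVarOrConst : Tm → Bool
  | .var _ => true
  | .const _ _ => true
  | _ => false

/-- Contains no lambda abstractor. -/
def noLam : Tm → Bool
  | .var _ => true
  | .const _ _ => true
  | .app f x => f.noLam && x.noLam
  | .lam _ _ => false
  | .neg x => x.noLam
  | .naf x => x.noLam
  | .disj x y => x.noLam && y.noLam
  | .conj x y => x.noLam && y.noLam
  | .rule x y => x.noLam && y.noLam
  | .ruleH x => x.noLam
  | .ruleB x => x.noLam
  | .seq x y => x.noLam && y.noLam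

/-- The head of an application spine is a variable. -/
def headIsVar : Tm → Bool
  | .var _ => true
  | .app f _ => f.headIsVar
  | _ => false

/-- Contains no application whose head is a (bound) variable. -/
def noVarApp : Tm → Bool
  | .var _ => true
  | .const _ _ => true
  | .app f x => !(f.headIsVar) && f.noVarApp && x.noVarApp
  | .lam _ b => b.noVarApp
  | .neg x => x.noVarApp
  | .naf x => x.noVarApp
  | .disj x y => x.noVarApp && y.noVarApp
  | .conj x y => x.noVarApp && y.noVarApp
  | .rule x y => x.noVarApp && y.noVarApp
  | .ruleH x => x.noVarApp
  | .ruleB x => x.noVarApp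
  | .seq x y => x.noVarApp && y.noVarApp

/-- Number of symbols of a formula (its size). -/
def size : Tm → ℕ
  | .var _ => 1
  | .const _ _ => 1
  | .app f x => f.size + x.size + 1
  | .lam _ b => b.size + 1
  | .neg x => x.size + 1
  | .naf x => x.size + 1
  | .disj x y => x.size + y.size + 1
  | .conj x y => x.size + y.size + 1
  | .rule x y => x.size + y.size + 1
  | .ruleH x => x.size + 1
  | .ruleB x => x.size + 1
  | .seq x y => x.size + y.size + 1

/-- Number of lambda abstractors; in a formula (where every abstractor binds a
    variable and every variable is bound) this is the number of variables. -/
def numAbs : Tm → ℕ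
  | .var _ => 0
  | .const _ _ => 0
  | .app f x => f.numAbs + x.numAbs
  | .lam _ b => b.numAbs + 1
  | .neg x => x.numAbs
  | .naf x => x.numAbs
  | .disj x y => x.numAbs + y.numAbs
  | .conj x y => x.numAbs + y.numAbs
  | .rule x y => x.numAbs + y.numAbs
  | .ruleH x => x.numAbs
  | .ruleB x => x.numAbs
  | .seq x y => x.numAbs + y.numAbs

/-- Replacement `t(A : B)`: replace every occurrence of `A` in `t` by `B`
    (shifting under binders). -/
def replace : Tm → Tm → Tm → Tm
  | .var n, A, B => if Tm.var n = A then B else .var n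
  | .const s T, A, B => if Tm.const s T = A then B else .const s T
  | .app f x, A, B => if Tm.app f x = A then B else .app (f.replace A B) (x.replace A B)
  | .lam T b, A, B => if Tm.lam T b = A then B else .lam T (b.replace (A.shift 1 0) (B.shift 1 0))
  | .neg x, A, B => if Tm.neg x = A then B else .neg (x.replace A B)
  | .naf x, A, B => if Tm.naf x = A then B else .naf (x.replace A B)
  | .disj x y, A, B => if Tm.disj x y = A then B else .disj (x.replace A B) (y.replace A B)
  | .conj x y, A, B => if Tm.conj x y = A then B else .conj (x.replace A B) (y.replace A B)
  | .rule x y, A, B => if Tm.rule x y = A then B else .rule (x.replace A B) (y.replace A B)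
  | .ruleH x, A, B => if Tm.ruleH x = A then B else .ruleH (x.replace A B)
  | .ruleB x, A, B => if Tm.ruleB x = A then B else .ruleB (x.replace A B)
  | .seq x y, A, B => if Tm.seq x y = A then B else .seq (x.replace A B) (y.replace A B)

/-- Simultaneous sequential replacement `t(A₁,…,Aₙ : B₁,…,Bₙ)`. -/
def replaceList : Tm → List (Tm × Tm) → Tm
  | t, [] => t
  | t, (A, B) :: r => (t.replace A B).replaceList r

/-- Iterated abstraction `λv₁ … λvₙ. b`. -/
def lams : List Ty → Tm → Tm
  | [], b => b
  | A :: r, b => .lam A (Tm.lams r b)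

/-- Iterated application `f @ x₁ @ ⋯ @ xₙ`. -/
def apps : Tm → List Tm → Tm
  | f, [] => f
  | f, x :: r => Tm.apps (.app f x) r

end Tm

/-- Typing relation for ASP typed terms (Definition "ASP Typed Term").
    The coercion rules carry the side condition that the coerced term
    is not a λ-term (i.e. not a variable or constant). -/
inductive HasType : List Ty → Tm → Ty → Prop
  | var {Γ n A} : Γ[n]? = some A → HasType Γ (.var n) A
  | const {Γ s A} : HasType Γ (.const s A) A
  | app {Γ f x A B} : HasType Γ f (.arrow A B) → HasType Γ x A → HasType Γ (.app f x) B
  | lam {Γ b A B} : HasType (A :: Γ) b B → HasType Γ (.lam A b) (.arrow A B)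
  | atomLit {Γ x} : HasType Γ x (.base .a) → x.isVarOrConst = false → HasType Γ x (.base .l)
  | negLit {Γ x} : HasType Γ x (.base .a) → HasType Γ (.neg x) (.base .l)
  | litGen {Γ x} : HasType Γ x (.base .l) → x.isVarOrConst = false → HasType Γ x (.base .g)
  | nafGen {Γ x} : HasType Γ x (.base .l) → HasType Γ (.naf x) (.base .g)
  | litHead {Γ x} : HasType Γ x (.base .l) → x.isVarOrConst = false → HasType Γ x (.base .h)
  | disj {Γ x y} : HasType Γ x (.base .h) → HasType Γ y (.base .h) →
      HasType Γ (.disj x y) (.base .h)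
  | genBody {Γ x} : HasType Γ x (.base .g) → x.isVarOrConst = false → HasType Γ x (.base .d)
  | conj {Γ x y} : HasType Γ x (.base .d) → HasType Γ y (.base .d) →
      HasType Γ (.conj x y) (.base .d)
  | rule {Γ x y} : HasType Γ x (.base .h) → HasType Γ y (.base .d) →
      HasType Γ (.rule x y) (.base .t)
  | ruleH {Γ x} : HasType Γ x (.base .h) → HasType Γ (.ruleH x) (.base .t)
  | ruleB {Γ y} : HasType Γ y (.base .d) → HasType Γ (.ruleB y) (.base .t)
  | seq {Γ x y} : HasType Γ x (.base .t) → HasType Γ y (.base .t) →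
      HasType Γ (.seq x y) (.base .t)

/-- A typed ASP λ-calculus formula of type `A`: a closed well-typed ASP term
    in which every abstractor binds a variable. -/
structure IsFormula (t : Tm) (A : Ty) : Prop where
  typed : HasType [] t A
  lamI : t.lamI = true

/-- One step of β-reduction (with congruence through all constructors). -/
inductive Step : Tm → Tm → Prop
  | beta {A b x} : Step (.app (.lam A b) x) (Tm.subst 0 x b)
  | appL {f f' x} : Step f f' → Step (.app f x) (.app f' x)
  | appR {f x x'} : Step x x' → Step (.app f x) (.app f x')
  | lam {A b b'} : Step b b' → Step (.lam A b) (.lam A b')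
  | neg {x x'} : Step x x' → Step (.neg x) (.neg x')
  | naf {x x'} : Step x x' → Step (.naf x) (.naf x')
  | disjL {x x' y} : Step x x' → Step (.disj x y) (.disj x' y)
  | disjR {x y y'} : Step y y' → Step (.disj x y) (.disj x y')
  | conjL {x x' y} : Step x x' → Step (.conj x y) (.conj x' y)
  | conjR {x y y'} : Step y y' → Step (.conj x y) (.conj x y')
  | ruleL {x x' y} : Step x x' → Step (.rule x y) (.rule x' y)
  | ruleR {x y y'} : Step y y' → Step (.rule x y) (.rule x y')
  | ruleH {x x'} : Step x x' → Step (.ruleH x) (.ruleH x')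
  | ruleB {x x'} : Step x x' → Step (.ruleB x) (.ruleB x')
  | seqL {x x' y} : Step x x' → Step (.seq x y) (.seq x' y)
  | seqR {x y y'} : Step y y' → Step (.seq x y) (.seq x y')

/-- Multi-step β-reduction. -/
abbrev Steps : Tm → Tm → Prop := Relation.ReflTransGen Step

/-- β-normal form: no β-redex occurrences, i.e. no step is possible. -/
def Tm.IsNormal (t : Tm) : Prop := ∀ u, ¬ Step t u

/-- `N` is the β-normal form of `M`. -/
def NormalizesTo (M N : Tm) : Prop := Steps M N ∧ N.IsNormal

/-- `Occurs P Q`: the term `P` occurs in `Q` (`P` is a sub-term of `Q`). -/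
inductive Occurs : Tm → Tm → Prop
  | refl (t : Tm) : Occurs t t
  | appL {P M N} : Occurs P M → Occurs P (.app M N)
  | appR {P M N} : Occurs P N → Occurs P (.app M N)
  | lam {P A M} : Occurs P M → Occurs P (.lam A M)
  | neg {P M} : Occurs P M → Occurs P (.neg M)
  | naf {P M} : Occurs P M → Occurs P (.naf M)
  | disjL {P M N} : Occurs P M → Occurs P (.disj M N)
  | disjR {P M N} : Occurs P N → Occurs P (.disj M N)
  | conjL {P M N} : Occurs P M → Occurs P (.conj M N)
  | conjR {P M N} : Occurs P N → Occurs P (.conj M N)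
  | ruleL {P M N} : Occurs P M → Occurs P (.rule M N)
  | ruleR {P M N} : Occurs P N → Occurs P (.rule M N)
  | ruleH {P M} : Occurs P M → Occurs P (.ruleH M)
  | ruleB {P M} : Occurs P M → Occurs P (.ruleB M)
  | seqL {P M N} : Occurs P M → Occurs P (.seq M N)
  | seqR {P M N} : Occurs P N → Occurs P (.seq M N)

/-- The `Inverse_L` algorithm, as a relation: `InvL H G F` holds exactly when
    one of the four cases of `Inverse_L(H,G)` applies and produces the
    (non-null) output `F`.  Variables `v₁,…,v_s` are represented by de Bruijn
    indices: under binders `λv₁…λv_s`, the variable `v_k` is index `s - k`. -/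
inductive InvL : Tm → Tm → Tm → Prop
  | case1 (H : Tm) (A : Ty) :
      InvL H (.lam A (.var 0)) (.lam (.arrow A A) (.app (.var 0) (H.shift 1 0)))
  | case2 (H G : Tm) (A : Ty) :
      Occurs G H → HasType [] G A →
      InvL H G (.lam A ((H.shift 1 0).replace (G.shift 1 0) (.var 0)))
  | case3 (H G : Tm) (W : Ty) (Js : List (Tm × List Tm)) (tys : List Ty)
      (ks : List ℕ) (s m : ℕ) :
      (∀ A : Ty, G ≠ .lam A (.var 0)) →
      Js ≠ [] →
      tys.length = s → 1 ≤ s → s ≤ m → ks.length = m →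
      (∀ k ∈ ks, 1 ≤ k ∧ k ≤ s) →
      (∀ Ja ∈ Js, Ja.2.length = m ∧ Occurs Ja.1 H ∧ (∀ x ∈ Ja.2, Occurs x Ja.1) ∧
        G = Tm.lams tys ((Ja.1.shift s 0).replaceList
              ((Ja.2.map (fun x => x.shift s 0)).zip
                (ks.map (fun k => Tm.var (s - k)))))) →
      InvL H G (.lam W ((H.shift 1 0).replaceList
        (Js.map (fun Ja => (Ja.1.shift 1 0,
          Tm.apps (.var 0) (ks.map (fun k => (Ja.2.getD (k - 1) Ja.1).shift 1 0)))))))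
  | case4 (H G : Tm) (W W' : Ty) (tysI tysS : List Ty) (J J1 : Tm)
      (args : List Tm) (ks : List ℕ) (i s : ℕ) :
      tysI.length = i → tysS.length = s - i → i < s →
      args.length = s - i → ks.length = s - i →
      (∀ k ∈ ks, i + 1 ≤ k ∧ k ≤ s) →
      H = Tm.lams tysI J →
      Occurs J1 J → (∀ x ∈ args, Occurs x J1) →
      G = .lam W ((J.shift 1 0).replace (J1.shift 1 0)
            (Tm.apps (.var 0) (ks.map (fun k => (args.getD (k - i - 1) J1).shift 1 0)))) →
      InvL H G (.lam W' (Tm.lams tysI (.app (.var i)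
        (Tm.lams tysS ((J1.shift (s + 1) 0).replaceList
          ((args.map (fun x => x.shift (s + 1) 0)).zip
            (ks.map (fun k => Tm.var (s - k)))))))))

/-- The `Inverse_R` algorithm, as a relation: `InvR H G F` holds exactly when
    one of the four cases of `Inverse_R(H,G)` applies and produces the
    (non-null) output `F`. -/
inductive InvR : Tm → Tm → Tm → Prop
  | case1 (H G J F : Tm) (A : Ty) :
      G = .lam A (.app (.var 0) (J.shift 1 0)) →
      InvL H J F → InvR H G F
  | case2 (H G J : Tm) (A : Ty) :
      Occurs J H → HasType [] J A →
      G = .lam A ((H.shift 1 0).replace (J.shift 1 0) (.var 0)) →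
      InvR H G J
  | case3 (H G : Tm) (W : Ty) (Js : List (Tm × List Tm)) (tys : List Ty)
      (ks : List ℕ) (s m : ℕ) (J1 : Tm) (args1 : List Tm) :
      (∀ (A : Ty) (J : Tm), G ≠ .lam A (.app (.var 0) (J.shift 1 0))) →
      Js ≠ [] → Js.head? = some (J1, args1) →
      tys.length = s → 1 ≤ s → s ≤ m → ks.length = m →
      (∀ k ∈ ks, 1 ≤ k ∧ k ≤ m) →
      (∀ Ja ∈ Js, Ja.2.length = m ∧ Occurs Ja.1 H ∧ (∀ x ∈ Ja.2, Occurs x Ja.1)) →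
      G = .lam W ((H.shift 1 0).replaceList
        (Js.map (fun Ja => (Ja.1.shift 1 0,
          Tm.apps (.var 0) (ks.map (fun k => (Ja.2.getD (k - 1) Ja.1).shift 1 0)))))) →
      InvR H G (Tm.lams tys ((J1.shift s 0).replaceList
        ((args1.map (fun x => x.shift s 0)).zip (ks.map (fun k => Tm.var (s - k))))))
  | case4 (H G : Tm) (W W' : Ty) (tysI tysS : List Ty) (J J1 : Tm)
      (args : List Tm) (ks : List ℕ) (i s : ℕ) :
      tysI.length = i → tysS.length = s - i → i < s →
      args.length = s - i → ks.length = s - i →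
      (∀ k ∈ ks, i + 1 ≤ k ∧ k ≤ s) →
      H = Tm.lams tysI J →
      Occurs J1 J → (∀ x ∈ args, Occurs x J1) →
      G = .lam W (Tm.lams tysI (.app (.var i)
        (Tm.lams tysS ((J1.shift (s + 1) 0).replaceList
          ((args.map (fun x => x.shift (s + 1) 0)).zip
            (ks.map (fun k => Tm.var (s - k)))))))) →
      InvR H G (.lam W' ((J.shift 1 0).replace (J1.shift 1 0)
        (Tm.apps (.var 0) (ks.map (fun k => (args.getD (k - i - 1) J1).shift 1 0)))))

/-! ### The Answer Set Programming language proper -/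

/-- ASP terms: constants, or function symbols applied to terms. -/
inductive ASPTerm : Tm → Prop
  | const (s : String) : ASPTerm (.const s (.base .e))
  | fn (f : String) (args : List Tm) :
      args ≠ [] → (∀ x ∈ args, ASPTerm x) →
      ASPTerm (Tm.apps (.const f (Ty.arrN args.length (.base .e) (.base .e))) args)

/-- ASP atoms: predicate symbols applied to terms. -/
inductive ASPAtom : Tm → Prop
  | pred (p : String) (args : List Tm) :
      (∀ x ∈ args, ASPTerm x) →
      ASPAtom (Tm.apps (.const p (Ty.arrN args.length (.base .e) (.base .a))) args)

/-- ASP literals: atoms or negated atoms. -/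
inductive ASPLit : Tm → Prop
  | atom {x} : ASPAtom x → ASPLit x
  | neg {x} : ASPAtom x → ASPLit (.neg x)

/-- ASP gen-literals: literals or naf-literals. -/
inductive ASPGen : Tm → Prop
  | lit {x} : ASPLit x → ASPGen x
  | naf {x} : ASPLit x → ASPGen (.naf x)

/-- Heads of ASP rules: `or`-connected literals. -/
inductive ASPHead : Tm → Prop
  | lit {x} : ASPLit x → ASPHead x
  | disj {x y} : ASPHead x → ASPHead y → ASPHead (.disj x y)

/-- Bodies of ASP rules: `,`-connected gen-literals. -/
inductive ASPBody : Tm → Prop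
  | gen {x} : ASPGen x → ASPBody x
  | conj {x y} : ASPBody x → ASPBody y → ASPBody (.conj x y)

/-- ASP rules `L₀ or … or L_k ← L_{k+1},…, not L_n.` (including facts and
    constraints). -/
inductive ASPRule : Tm → Prop
  | mk {h b} : ASPHead h → ASPBody b → ASPRule (.rule h b)
  | fact {h} : ASPHead h → ASPRule (.ruleH h)
  | constr {b} : ASPBody b → ASPRule (.ruleB b)

/-- ASP programs: `.`-separated sequences of ASP rules. -/
inductive ASPProg : Tm → Prop
  | single {r} : ASPRule r → ASPProg r
  | seq {x y} : ASPProg x → ASPProg y → ASPProg (.seq x y)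

/-- Expressions of the ASP language, by base type. -/
def ASPExpr (M : Tm) : BTy → Prop
  | .e => ASPTerm M
  | .a => ASPAtom M
  | .l => ASPLit M
  | .g => ASPGen M
  | .h => ASPHead M
  | .d => ASPBody M
  | .t => ASPProg M


theorem Tm.subst_shift_cancel (t : Tm) : ∀ (c : ℕ) (s : Tm), Tm.subst c s (t.shift 1 c) = t := by
  induction t with
  | var n =>
    intro c s
    simp only [Tm.shift]
    split_ifs with h
    · have h1 : n ≠ c := by omega
      have h2 : ¬ c < n := by omega
      simp [Tm.subst, h1, h2]
    · have h1 : n + 1 ≠ c := by omega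
      have h2 : c < n + 1 := by omega
      simp [Tm.subst, h1, h2]
  | _ => intros; simp_all [Tm.shift, Tm.subst]

/-- **Soundness of case 1 of `Inverse_L`.**  If `G` is the identity formula `λv.v` of
type `A → A` and `H` is a typed ASP λ-calculus formula of type `A` in β-normal form,
then `F = λv.(v @ H)` (of type `(A → A) → A`) satisfies `F @ G = H` after
β-reduction. -/
theorem invL_case1_sound (H : Tm) (A : Ty)
    (hH : IsFormula H A) (hHnf : H.IsNormal) :
    NormalizesTo
      (Tm.app (Tm.lam (.arrow A A) (.app (.var 0) (H.shift 1 0))) (Tm.lam A (.var 0)))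
      H := by
  refine ⟨?_, hHnf⟩
  refine Relation.ReflTransGen.head Step.beta ?_
  have h : Tm.subst 0 (Tm.lam A (.var 0)) (.app (.var 0) (H.shift 1 0))
      = Tm.app (Tm.lam A (.var 0)) H := by
    simp [Tm.subst, Tm.subst_shift_cancel]
  rw [h]
  refine Relation.ReflTransGen.single ?_
  have h2 : Tm.subst 0 H (.var 0) = H := by simp [Tm.subst]
  exact h2 ▸ (Step.beta (A := A) (b := .var 0) (x := H))

end ASPLambda
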